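/- Let μ and μ_n (n ∈ ℕ) be s-graphons. Then the following two conditions are equivalent: (1) for every k ∈ ℕ, the k-shapes C(μ_n,k) converge to C(μ,k) in the Vietoris topology on the hyperspace of compact subsets of the space of real k-by-k matrices; (2) the shapes C(μ_n) converge to C(μ) in the Vietoris topology on the hyperspace of compact subsets of the space of s-graphons with the weak topology. -/

import Mathlib

open MeasureTheory Topology Filter

noncomputable section

/-- The unit square `[0,1]²`. -/
abbrev Sq : Type := unitInterval × unitInterval

/-- Convergence of a sequence of subsets in the Vietoris topology
(upper + lower Vietoris convergence). -/
def VietorisTendsto {X : Type*} [TopologicalSpace X] (A : ℕ → Set X) (B : Set X) : Prop :=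
  (∀ U : Set X, IsOpen U → B ⊆ U → ∀ᶠ n in atTop, A n ⊆ U) ∧
  (∀ U : Set X, IsOpen U → (B ∩ U).Nonempty → ∀ᶠ n in atTop, (A n ∩ U).Nonempty)

/-- A measure on the unit square is symmetric if it is invariant under the coordinate swap. -/
def IsSymmSq (μ : Measure Sq) : Prop := μ.map Prod.swap = μ

/-- s-graphons: symmetric Borel probability measures on the unit square,
with the weak topology. -/
def SGraphon : Type := {μ : ProbabilityMeasure Sq // IsSymmSq (μ : Measure Sq)}

instance : TopologicalSpace SGraphon :=
  inferInstanceAs (TopologicalSpace {μ : ProbabilityMeasure Sq // IsSymmSq (μ : Measure Sq)})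

/-- The underlying measure of an s-graphon. -/
def SGraphon.toMeasure (μ : SGraphon) : Measure Sq := (μ.1 : Measure Sq)

/-- A non-negative bounded Borel function on the unit square is fairly distributed
if all its horizontal and vertical sections integrate (w.r.t. Lebesgue measure) to 1. -/
structure FairlyDistributed (f : Sq → ℝ) : Prop where
  measurable : Measurable f
  nonneg : ∀ p, 0 ≤ f p
  bounded : ∃ C : ℝ, ∀ p, f p ≤ C
  row : ∀ x : unitInterval, ∫ v, f (x, v) = 1
  col : ∀ y : unitInterval, ∫ u, f (u, y) = 1

/-- The density `φ(f,μ)`. -/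
def phiFn (f : Sq → ℝ) (μ : Measure Sq) (p : Sq) : ℝ :=
  ∫ q, f (q.1, p.1) * f (q.2, p.2) ∂μ

/-- The measure `Φ(f,μ)`, with density `φ(f,μ)` w.r.t. 2-dimensional Lebesgue measure. -/
def PhiMeas (f : Sq → ℝ) (μ : Measure Sq) : Measure Sq :=
  volume.withDensity fun p => ENNReal.ofReal (phiFn f μ p)

/-- The shape of a measure `μ` on the unit square: the weak closure of the set of
(s-graphons corresponding to) the measures `Φ(f,μ)`, `f` continuous fairly distributed. -/
def shapeM (μ : Measure Sq) : Set SGraphon :=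
  closure {ν : SGraphon | ∃ f : Sq → ℝ, FairlyDistributed f ∧ Continuous f ∧
    ν.toMeasure = PhiMeas f μ}

/-- The shape `C(μ)` of an s-graphon. -/
def shape (μ : SGraphon) : Set SGraphon := shapeM μ.toMeasure

/-- A fractional partition into `k` parts: non-negative Borel functions on `[0,1]`
summing to the constant function 1, each integrating to `1/k`. -/
def IsFracPartition (k : ℕ) (f : Fin k → unitInterval → ℝ) : Prop :=
  (∀ i, Measurable (f i)) ∧ (∀ i x, 0 ≤ f i x) ∧ (∀ x, ∑ i, f i x = 1) ∧
    ∀ i, ∫ x, f i x = 1 / k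

/-- The `k`-shape `C(μ,k)`: the closure in `ℝ^{k×k}` of the set of density matrices of
fractional partitions into `k` parts. -/
def kShape (μ : Measure Sq) (k : ℕ) : Set (Matrix (Fin k) (Fin k) ℝ) :=
  closure {M | ∃ f : Fin k → unitInterval → ℝ, IsFracPartition k f ∧
    ∀ i j, M i j = ∫ p, f i p.1 * f j p.2 ∂μ}

/-- `M_k^*`: symmetric `k×k` matrices with non-negative entries summing to 1. -/
def Mstar (k : ℕ) : Set (Matrix (Fin k) (Fin k) ℝ) :=
  {M | M.IsSymm ∧ (∀ i j, 0 ≤ M i j) ∧ ∑ i, ∑ j, M i j = 1}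

/-- The index `i` (0-based) with `u ∈ [i/k, (i+1)/k)` (and `i = k-1` for `u = 1`). -/
def gridIdx (k : ℕ) (hk : 0 < k) (u : unitInterval) : Fin k :=
  ⟨min ⌊(u : ℝ) * k⌋₊ (k - 1), lt_of_le_of_lt (min_le_right _ _) (Nat.sub_lt hk one_pos)⟩

/-- The measure `μ_M` associated to a `k×k` matrix `M`: its density w.r.t. 2-dimensional
Lebesgue measure equals `k² M(i,j)` on the square `[i/k,(i+1)/k) × [j/k,(j+1)/k)` (0-based). -/
def muM {k : ℕ} (M : Matrix (Fin k) (Fin k) ℝ) : Measure Sq :=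
  if hk : 0 < k then
    volume.withDensity fun p =>
      ENNReal.ofReal ((k : ℝ) ^ 2 * M (gridIdx k hk p.1) (gridIdx k hk p.2))
  else 0

/-- `C̃(μ,k)`: the `k`-shape of `μ`, interpreted as a set of s-graphons. -/
def kShapeTilde (μ : Measure Sq) (k : ℕ) : Set SGraphon :=
  {ν : SGraphon | ∃ M ∈ kShape μ k, ν.toMeasure = muM M}

/-- The interval `I_i = [i/k, (i+1)/k)` (0-based), with `I_{k-1} = [(k-1)/k, 1]`,
as a subset of `[0,1]`. -/
def Ik (k : ℕ) (i : Fin k) : Set unitInterval :=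
  if (i : ℕ) + 1 = k then Subtype.val ⁻¹' Set.Icc (((i : ℕ) : ℝ) / k) 1
  else Subtype.val ⁻¹' Set.Ico (((i : ℕ) : ℝ) / k) ((((i : ℕ) : ℝ) + 1) / k)

/-! A fractional partition `f` into `k` parts gives two maps. Coarsening sends an s-graphon to its
`k × k` density matrix along `f`, and spreading sends a matrix `M` in `M_k^*` to the s-graphon of
density `k² ∑ M i j f i ⊗ f j`. For continuous `f` both are continuous and, for every `μ`, they
exchange `C(μ)` and `C(μ,k)`: coarsening `Φ(w,μ)` along `f` is coarsening `μ` along the averages of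
`f` by `w`, while coarsening `μ` along `c` and then spreading along `f` gives `Φ(k ∑ c i ⊗ f i, μ)`.
The round trips come arbitrarily close to the identity: for the partition into `k` equal intervals,
spreading then coarsening fixes every matrix, and coarsening then spreading tends to the identity
as `k → ∞`; moreover every fractional partition is an almost everywhere limit of continuous ones.
Vietoris convergence of closed sets in a compact space can then be tested after coarsening or
spreading, which gives the two implications. -/

/-! ### Vietoris convergence -/

theorem vietorisTendsto_preimage_iff {X Y : Type*} [TopologicalSpace X] [TopologicalSpace Y]
    {f : X → Y} (hf : IsInducing f) {A : ℕ → Set Y} {B : Set Y}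
    (hA : ∀ n, A n ⊆ Set.range f) (hB : B ⊆ Set.range f) :
    VietorisTendsto (fun n => f ⁻¹' A n) (f ⁻¹' B) ↔ VietorisTendsto A B := by
  have inter_nonempty : ∀ {S : Set Y}, S ⊆ Set.range f → ∀ V : Set Y,
      ((f ⁻¹' S ∩ f ⁻¹' V).Nonempty ↔ (S ∩ V).Nonempty) := fun {S} hS V => by
    rw [← Set.preimage_inter, ← Set.image_nonempty, Set.image_preimage_eq_of_subset]
    exact Set.inter_subset_left.trans hS
  simp only [VietorisTendsto, hf.isOpen_iff, forall_exists_index, and_imp,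
    forall_apply_eq_imp_iff₂, Set.preimage_subset_preimage_iff (hA _),
    Set.preimage_subset_preimage_iff hB, inter_nonempty (hA _), inter_nonempty hB]

theorem vietorisTendsto_of_mem_closure {Γ ι X : Type*} [TopologicalSpace X] [CompactSpace X]
    {Y : ι → Type*} [∀ i, TopologicalSpace (Y i)] [∀ i, RegularSpace (Y i)]
    {p : ∀ i, X → Y i} {t : ∀ i, Y i → X} (hp : ∀ i, Continuous (p i))
    (ht : ∀ i, Continuous (t i)) (hpt : ∀ x, x ∈ closure (Set.range fun i => t i (p i x)))
    {A : Γ → Set X} {B : ∀ i, Γ → Set (Y i)}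
    (hpAB : ∀ i γ, Set.MapsTo (p i) (A γ) (B i γ)) (htBA : ∀ i γ, Set.MapsTo (t i) (B i γ) (A γ))
    {γn : ℕ → Γ} {γ : Γ} (hA : IsClosed (A γ)) (hB : ∀ i, IsClosed (B i γ))
    (hlim : ∀ i, VietorisTendsto (fun n => B i (γn n)) (B i γ)) :
    VietorisTendsto (fun n => A (γn n)) (A γ) := by
  have exists_mem {x : X} {U : Set X} (hU : IsOpen U) (hx : x ∈ U) : ∃ i, t i (p i x) ∈ U := by
    obtain ⟨_, hy, i, rfl⟩ := mem_closure_iff.1 (hpt x) U hU hx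
    exact ⟨i, hy⟩
  refine ⟨fun U hU hAU => ?_, fun U hU ⟨x, hxA, hxU⟩ => ?_⟩
  · suffices ∀ᶠ n in atTop, Disjoint (A (γn n)) Uᶜ by
      simpa only [Set.disjoint_compl_right_iff_subset] using this
    refine hU.isClosed_compl.isCompact.induction_on (by simp)
      (fun _ _ hst h => h.mono fun _ hn => hn.mono_right hst)
      (fun _ _ hs ht => (hs.and ht).mono fun _ hn => hn.1.union_right hn.2) fun x hx => ?_
    obtain ⟨i, hi⟩ := exists_mem hA.isOpen_compl fun hxA => hx (hAU hxA)
    have hpx : p i x ∉ closure (B i γ) := by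
      rw [(hB i).closure_eq]
      exact fun h => hi (htBA i γ h)
    obtain ⟨V, ⟨hV, hBV⟩, W, hW, hVW⟩ :=
      ((hasBasis_nhdsSet (B i γ)).disjoint_iff (𝓝 (p i x)).basis_sets).1
        (disjoint_nhdsSet_nhds.2 hpx)
    refine ⟨p i ⁻¹' W, mem_nhdsWithin_of_mem_nhds ((hp i).continuousAt hW), ?_⟩
    filter_upwards [(hlim i).1 V hV hBV] with n hn
    exact Set.disjoint_left.2 fun y hyA hyW =>
      Set.disjoint_left.1 hVW (hn (hpAB i _ hyA)) hyW
  · obtain ⟨i, hi⟩ := exists_mem hU hxU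
    filter_upwards [(hlim i).2 (t i ⁻¹' U) (hU.preimage (ht i)) ⟨p i x, hpAB i γ hxA, hi⟩]
    rintro n ⟨y, hyB, hyU⟩
    exact ⟨t i y, htBA i _ hyB, hyU⟩

/-! ### Compactness of the spaces of s-graphons and of matrices -/

theorem isSymmSq_withDensity {D : Sq → ENNReal} (hD : Measurable D)
    (hsymm : ∀ p, D p.swap = D p) : IsSymmSq (volume.withDensity D) := by
  have hswap : MeasurePreserving (Prod.swap : Sq → Sq) volume volume :=
    Measure.measurePreserving_swap
  refine Measure.ext fun s hs => ?_
  rw [Measure.map_apply measurable_swap hs, withDensity_apply _ (measurable_swap hs),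
    withDensity_apply _ hs, ← hswap.setLIntegral_comp_preimage hs hD]
  simp only [hsymm]

namespace SGraphon

instance : T2Space SGraphon :=
  inferInstanceAs (T2Space {μ : ProbabilityMeasure Sq // IsSymmSq (μ : Measure Sq)})

instance : CompactSpace SGraphon := by
  have hclosed : IsClosed {μ : ProbabilityMeasure Sq | IsSymmSq (μ : Measure Sq)} := by
    simp only [IsSymmSq, ← ProbabilityMeasure.toMeasure_map (hf := measurable_swap.aemeasurable),
      ProbabilityMeasure.toMeasure_injective.eq_iff]
    exact isClosed_eq (ProbabilityMeasure.continuous_map continuous_swap) continuous_id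
  exact isCompact_iff_compactSpace.1 hclosed.isCompact

instance (μ : SGraphon) : IsProbabilityMeasure μ.toMeasure :=
  inferInstanceAs (IsProbabilityMeasure (μ.1 : Measure Sq))

theorem integral_comp_swap (μ : SGraphon) (F : Sq → ℝ) :
    ∫ p, F p.swap ∂μ.toMeasure = ∫ p, F p ∂μ.toMeasure :=
  MeasurePreserving.integral_comp' (f := MeasurableEquiv.prodComm)
    ⟨measurable_swap, μ.2⟩ F

theorem tendsto_iff_forall_integral_tendsto {ι : Type*} {l : Filter ι} {ν : ι → SGraphon}
    {μ : SGraphon} : Tendsto ν l (𝓝 μ) ↔ ∀ F : C(Sq, ℝ),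
      Tendsto (fun i => ∫ p, F p ∂(ν i).toMeasure) l (𝓝 (∫ p, F p ∂μ.toMeasure)) := by
  have hind : IsInducing (Subtype.val : SGraphon → ProbabilityMeasure Sq) := .subtypeVal
  refine hind.tendsto_nhds_iff.trans
    (ProbabilityMeasure.tendsto_iff_forall_integral_tendsto.trans ?_)
  exact ⟨fun h F => h (BoundedContinuousFunction.mkOfCompact F), fun h F => h F.toContinuousMap⟩

/-- The s-graphon with density `D` with respect to the Lebesgue measure on the unit square. -/
def ofDensity (D : Sq → ℝ) (hD : Measurable D) (hnonneg : 0 ≤ D) (hint : ∫ p, D p = 1)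
    (hsymm : ∀ p, D p.swap = D p) : SGraphon :=
  ⟨⟨volume.withDensity fun p => ENNReal.ofReal (D p), ⟨by
    rw [withDensity_apply _ .univ, setLIntegral_univ, ← ofReal_integral_eq_lintegral_ofReal
      (integrable_of_integral_eq_one hint) (ae_of_all _ hnonneg), hint, ENNReal.ofReal_one]⟩⟩,
    isSymmSq_withDensity hD.ennreal_ofReal fun p => by rw [hsymm]⟩

end SGraphon

theorem integral_withDensity_ofReal {α : Type*} [MeasurableSpace α] {ν : Measure α} {D : α → ℝ}
    (hD : Measurable D) (hnonneg : 0 ≤ D) (F : α → ℝ) :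
    ∫ x, F x ∂ν.withDensity (fun x => ENNReal.ofReal (D x)) = ∫ x, D x * F x ∂ν := by
  rw [integral_withDensity_eq_integral_toReal_smul hD.ennreal_ofReal (by simp)]
  simp only [ENNReal.toReal_ofReal (hnonneg _), smul_eq_mul]

theorem isClosed_Mstar (k : ℕ) : IsClosed (Mstar k) := by
  simp only [Mstar, Matrix.IsSymm, Set.ofPred_and, Set.ofPred_forall]
  exact (isClosed_eq (by fun_prop) continuous_id).inter
    ((isClosed_iInter fun i => isClosed_iInter fun j => isClosed_le continuous_const
      (by fun_prop)).inter (isClosed_eq (by fun_prop) continuous_const))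

instance (k : ℕ) : CompactSpace (Mstar k) := by
  have hcube : IsCompact (Set.univ.pi fun _ => Set.univ.pi fun _ => Set.Icc 0 1 :
      Set (Fin k → Fin k → ℝ)) :=
    isCompact_univ_pi fun _ => isCompact_univ_pi fun _ => isCompact_Icc
  refine isCompact_iff_compactSpace.1 (hcube.of_isClosed_subset (isClosed_Mstar k) ?_)
  rintro M ⟨-, hnonneg, hsum⟩ i - j -
  refine ⟨hnonneg i j, hsum ▸ ?_⟩
  exact (Finset.single_le_sum (fun j _ => hnonneg i j) (Finset.mem_univ j)).trans
    (Finset.single_le_sum (f := fun i => ∑ j, M i j)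
      (fun i _ => Finset.sum_nonneg fun j _ => hnonneg i j) (Finset.mem_univ i))

/-! ### Density of continuous fractional partitions -/

theorem exists_seq_boundedContinuous_tendsto_ae {α E : Type*} [TopologicalSpace α] [NormalSpace α]
    [MeasurableSpace α] [BorelSpace α] [NormedAddCommGroup E] [NormedSpace ℝ E] {η : Measure α}
    [η.WeaklyRegular] {f : α → E} (hf : Integrable f η) :
    ∃ φ : ℕ → BoundedContinuousFunction α E,
      ∀ᵐ x ∂η, Tendsto (fun n => φ n x) atTop (𝓝 (f x)) := by
  obtain ⟨u, -, hupos, hu⟩ := exists_seq_strictAnti_tendsto' (zero_lt_one' ENNReal)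
  choose φ hφ hφint using fun n =>
    hf.exists_boundedContinuous_lintegral_sub_le (hupos n).1.ne'
  have hL1 : Tendsto (fun n => eLpNorm (⇑(φ n) - f) 1 η) atTop (𝓝 0) := by
    refine tendsto_of_tendsto_of_tendsto_of_le_of_le tendsto_const_nhds hu (fun _ => zero_le)
      fun n => ?_
    rw [eLpNorm_sub_comm, eLpNorm_one_eq_lintegral_enorm]
    exact hφ n
  obtain ⟨ns, -, hns⟩ := (tendstoInMeasure_of_tendsto_eLpNorm one_ne_zero
    (fun n => (hφint n).aestronglyMeasurable) hf.aestronglyMeasurable hL1).exists_seq_tendsto_ae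
  exact ⟨φ ∘ ns, hns⟩

section SimplexRetraction

variable {ι : Type*} [Fintype ι]

/-- A continuous retraction of `ℝ^ι` onto the standard simplex: take positive parts, spread the
missing mass evenly over the coordinates, and normalise. -/
def simplexRetraction (y : ι → ℝ) (i : ι) : ℝ :=
  (max (y i) 0 + max (1 - ∑ j, max (y j) 0) 0 / Fintype.card ι) / max 1 (∑ j, max (y j) 0)

theorem continuous_simplexRetraction : Continuous (simplexRetraction (ι := ι)) := by
  refine continuous_pi fun i => Continuous.div (by fun_prop) (by fun_prop) fun y => ?_
  exact (zero_lt_one.trans_le (le_max_left _ _)).ne'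

theorem simplexRetraction_mem_stdSimplex [Nonempty ι] (y : ι → ℝ) :
    simplexRetraction y ∈ stdSimplex ℝ ι := by
  have hcard : (Fintype.card ι : ℝ) ≠ 0 := Nat.cast_ne_zero.2 Fintype.card_ne_zero
  have hmax : 0 < max 1 (∑ j, max (y j) 0) := zero_lt_one.trans_le (le_max_left _ _)
  refine ⟨fun i => by rw [simplexRetraction]; positivity, ?_⟩
  simp only [simplexRetraction, ← Finset.sum_div, Finset.sum_add_distrib, Finset.sum_const,
    Finset.card_univ, nsmul_eq_mul]
  rw [mul_div_cancel_left₀ _ hcard, div_eq_one_iff_eq hmax.ne', ← max_add_add_left,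
    add_sub_cancel, add_zero]

theorem simplexRetraction_eq_self {y : ι → ℝ} (hy : y ∈ stdSimplex ℝ ι) :
    simplexRetraction y = y := by
  funext i
  simp only [simplexRetraction, max_eq_left (hy.1 _), hy.2, sub_self, max_self, zero_div,
    add_zero, div_one]

end SimplexRetraction

namespace IsFracPartition

variable {k : ℕ} {f : Fin k → unitInterval → ℝ}

theorem measurable (hf : IsFracPartition k f) (i : Fin k) : Measurable (f i) := hf.1 i

theorem nonneg (hf : IsFracPartition k f) (i : Fin k) (x : unitInterval) : 0 ≤ f i x := hf.2.1 i x

theorem sum_eq_one (hf : IsFracPartition k f) (x : unitInterval) : ∑ i, f i x = 1 := hf.2.2.1 x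

theorem integral_eq (hf : IsFracPartition k f) (i : Fin k) : ∫ x, f i x = 1 / k := hf.2.2.2 i

theorem mem_stdSimplex (hf : IsFracPartition k f) (x : unitInterval) :
    (f · x) ∈ stdSimplex ℝ (Fin k) :=
  ⟨(hf.nonneg · x), hf.sum_eq_one x⟩

theorem norm_le_one (hf : IsFracPartition k f) (i : Fin k) (x : unitInterval) : ‖f i x‖ ≤ 1 := by
  rw [Real.norm_of_nonneg (hf.nonneg i x), ← hf.sum_eq_one x]
  exact Finset.single_le_sum (fun j _ => hf.nonneg j x) (Finset.mem_univ i)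

theorem neZero (hf : IsFracPartition k f) : NeZero k := by
  refine ⟨?_⟩
  rintro rfl
  simpa using hf.sum_eq_one 0

end IsFracPartition

/-- Adjusts the means of a partition of unity `c`, so that each part has integral `1 / k`, by
adding constants and rescaling. The added constants are nonnegative: the part of index `i` gets
the sum of all the absolute errors of the means minus its own error. -/
def balance {k : ℕ} (c : Fin k → unitInterval → ℝ) (i : Fin k) (x : unitInterval) : ℝ :=
  (c i x + (∑ j, |(∫ y, c j y) - 1 / k| - ((∫ y, c i y) - 1 / k))) /
    (1 + k * ∑ j, |(∫ y, c j y) - 1 / k|)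

theorem isFracPartition_balance {k : ℕ} [NeZero k] {c : Fin k → unitInterval → ℝ}
    (hmeas : ∀ i, Measurable (c i)) (hsimplex : ∀ x, (c · x) ∈ stdSimplex ℝ (Fin k)) :
    IsFracPartition k (balance c) := by
  have hk : (k : ℝ) ≠ 0 := Nat.cast_ne_zero.2 (NeZero.ne k)
  have hint (i : Fin k) : Integrable (c i) :=
    .of_bound (hmeas i).aestronglyMeasurable 1 <| ae_of_all _ fun x => by
      rw [Real.norm_of_nonneg ((hsimplex x).1 i)]
      exact (mem_Icc_of_mem_stdSimplex (hsimplex x) i).2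
  have hmean : ∑ i, ((∫ y, c i y) - 1 / k) = 0 := by
    rw [Finset.sum_sub_distrib, ← integral_finsetSum _ fun i _ => hint i]
    simp [(hsimplex _).2, hk]
  unfold balance
  set r := ∑ j, |(∫ y, c j y) - 1 / k|
  have hr : 0 ≤ r := Finset.sum_nonneg fun j _ => abs_nonneg _
  have hden : 0 < 1 + k * r :=
    add_pos_of_pos_of_nonneg one_pos (mul_nonneg k.cast_nonneg hr)
  refine ⟨fun i => by fun_prop, fun i x => ?_, fun x => ?_, fun i => ?_⟩
  · have herr : (∫ y, c i y) - 1 / k ≤ r := (le_abs_self _).trans <|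
      Finset.single_le_sum (f := fun j => |(∫ y, c j y) - 1 / (k : ℝ)|)
        (fun j _ => abs_nonneg _) (Finset.mem_univ i)
    exact div_nonneg (add_nonneg ((hsimplex x).1 i) (sub_nonneg.2 herr)) hden.le
  · rw [← Finset.sum_div, Finset.sum_add_distrib, Finset.sum_sub_distrib, hmean, (hsimplex x).2]
    simp [hden.ne']
  · rw [integral_div, integral_add (hint i) (integrable_const _), integral_const,
      probReal_univ, one_smul, div_eq_iff hden.ne']
    field_simp
    ring

theorem tendsto_balance {ι : Type*} {l : Filter ι} {k : ℕ} {c : ι → Fin k → unitInterval → ℝ}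
    (hmean : ∀ i, Tendsto (fun n => ∫ y, c n i y) l (𝓝 (1 / k))) {i : Fin k} {x : unitInterval}
    {a : ℝ} (hx : Tendsto (fun n => c n i x) l (𝓝 a)) :
    Tendsto (fun n => balance (c n) i x) l (𝓝 a) := by
  have herr (j : Fin k) : Tendsto (fun n => (∫ y, c n j y) - 1 / k) l (𝓝 0) := by
    simpa using (hmean j).sub_const (1 / (k : ℝ))
  have hsum : Tendsto (fun n => ∑ j, |(∫ y, c n j y) - 1 / k|) l (𝓝 0) := by
    simpa using tendsto_finsetSum Finset.univ fun j _ => (herr j).abs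
  have hlim := (hx.add (hsum.sub (herr i))).div ((hsum.const_mul (k : ℝ)).const_add 1) (by simp)
  rwa [sub_zero, add_zero, mul_zero, add_zero, div_one] at hlim

/-- The fractional partitions of `[0,1]` into `k` continuous parts. -/
abbrev ContFracPartition (k : ℕ) : Type :=
  {h : Fin k → C(unitInterval, ℝ) // IsFracPartition k fun i => h i}

theorem IsFracPartition.exists_seq_tendsto_ae {k : ℕ} {f : Fin k → unitInterval → ℝ}
    (hf : IsFracPartition k f) (η : Measure unitInterval) [IsFiniteMeasure η] :
    ∃ h : ℕ → ContFracPartition k,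
      ∀ᵐ x ∂η, ∀ i, Tendsto (fun n => (h n).1 i x) atTop (𝓝 (f i x)) := by
  have := hf.neZero
  have hint : Integrable (fun x i => f i x) (η + volume) :=
    .of_bound (measurable_pi_iff.2 hf.measurable).aestronglyMeasurable 1 <| ae_of_all _ fun x =>
      (pi_norm_le_iff_of_nonneg zero_le_one).2 (hf.norm_le_one · x)
  obtain ⟨φ, hφ⟩ := exists_seq_boundedContinuous_tendsto_ae hint
  let c (n : ℕ) (i : Fin k) (x : unitInterval) : ℝ := simplexRetraction (φ n x) i
  have hcsimplex (n : ℕ) (x : unitInterval) : (c n · x) ∈ stdSimplex ℝ (Fin k) :=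
    simplexRetraction_mem_stdSimplex _
  have hccont (n : ℕ) (i : Fin k) : Continuous (c n i) :=
    (continuous_apply i).comp (continuous_simplexRetraction.comp (φ n).continuous)
  have hc : ∀ᵐ x ∂(η + volume), ∀ i, Tendsto (fun n => c n i x) atTop (𝓝 (f i x)) := by
    filter_upwards [hφ] with x hx i
    have := tendsto_pi_nhds.1 ((continuous_simplexRetraction.tendsto _).comp hx) i
    rwa [simplexRetraction_eq_self (hf.mem_stdSimplex x)] at this
  rw [ae_add_measure_iff] at hc
  have hmean (i : Fin k) : Tendsto (fun n => ∫ x, c n i x) atTop (𝓝 (1 / k)) := by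
    rw [← hf.integral_eq i]
    refine tendsto_integral_of_dominated_convergence (fun _ => 1)
      (fun n => (hccont n i).aestronglyMeasurable) (integrable_const 1)
      (fun n => ae_of_all _ fun x => ?_) (hc.2.mono fun x hx => hx i)
    rw [Real.norm_of_nonneg ((hcsimplex n x).1 i)]
    exact (mem_Icc_of_mem_stdSimplex (hcsimplex n x) i).2
  refine ⟨fun n => ⟨fun i => ⟨balance (c n) i, ?_⟩, ?_⟩,
    hc.1.mono fun x hx i => tendsto_balance hmean (hx i)⟩
  · exact ((hccont n i).add continuous_const).div_const _
  · exact isFracPartition_balance (fun i => (hccont n i).measurable) (hcsimplex n)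

theorem IsFracPartition.exists_seq_mul_tendsto_ae {k : ℕ} {f : Fin k → unitInterval → ℝ}
    (hf : IsFracPartition k f) (ρ : Measure Sq) [IsFiniteMeasure ρ] :
    ∃ h : ℕ → ContFracPartition k, ∀ᵐ p ∂ρ, ∀ i j,
      Tendsto (fun n => (h n).1 i p.1 * (h n).1 j p.2) atTop (𝓝 (f i p.1 * f j p.2)) := by
  obtain ⟨h, hh⟩ := hf.exists_seq_tendsto_ae (ρ.map Prod.fst + ρ.map Prod.snd)
  rw [ae_add_measure_iff] at hh
  refine ⟨h, ?_⟩
  filter_upwards [ae_of_ae_map measurable_fst.aemeasurable hh.1,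
    ae_of_ae_map measurable_snd.aemeasurable hh.2] with p h1 h2 i j
  exact (h1 i).mul (h2 j)

/-! ### Coarsening and spreading -/

/-- The density matrix of a tuple of functions `f`, with entries `∫ f i (x) f j (y) dμ(x,y)`; the
`k`-shape is the closure of the set of density matrices of fractional partitions. -/
def densityMatrix {k : ℕ} (μ : Measure Sq) (f : Fin k → unitInterval → ℝ) :
    Matrix (Fin k) (Fin k) ℝ :=
  .of fun i j => ∫ p, f i p.1 * f j p.2 ∂μ

/-- The density `k² ∑ M i j f i (x) f j (y)` of the measure that spreads the mass of each entry
`M i j` over the square proportionally to `f i ⊗ f j`. -/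
def spreadDensity {k : ℕ} (f : Fin k → unitInterval → ℝ) (M : Matrix (Fin k) (Fin k) ℝ)
    (p : Sq) : ℝ :=
  (k : ℝ) ^ 2 * ∑ i, ∑ j, M i j * (f i p.1 * f j p.2)

theorem spreadDensity_swap {k : ℕ} (f : Fin k → unitInterval → ℝ)
    {M : Matrix (Fin k) (Fin k) ℝ} (hM : M.IsSymm) (p : Sq) :
    spreadDensity f M p.swap = spreadDensity f M p := by
  rw [spreadDensity, Finset.sum_comm]
  simp only [spreadDensity, Prod.fst_swap, Prod.snd_swap, hM.apply, mul_comm (f _ p.2)]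

namespace IsFracPartition

variable {k : ℕ} {f : Fin k → unitInterval → ℝ}

theorem measurable_mul (hf : IsFracPartition k f) (i j : Fin k) :
    Measurable fun p : Sq => f i p.1 * f j p.2 :=
  ((hf.measurable i).comp measurable_fst).mul ((hf.measurable j).comp measurable_snd)

theorem norm_mul_le_one (hf : IsFracPartition k f) (i j : Fin k) (p : Sq) :
    ‖f i p.1 * f j p.2‖ ≤ 1 := by
  rw [norm_mul]
  exact mul_le_one₀ (hf.norm_le_one i _) (norm_nonneg _) (hf.norm_le_one j _)

theorem integrable_mul (hf : IsFracPartition k f) (ρ : Measure Sq) [IsFiniteMeasure ρ]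
    (i j : Fin k) : Integrable (fun p : Sq => f i p.1 * f j p.2) ρ :=
  .of_bound (hf.measurable_mul i j).aestronglyMeasurable 1 (ae_of_all _ (hf.norm_mul_le_one i j))

theorem sum_mul_eq_one (hf : IsFracPartition k f) (p : Sq) :
    ∑ i, ∑ j, f i p.1 * f j p.2 = 1 := by
  simp only [← Finset.mul_sum, hf.sum_eq_one, mul_one]

theorem densityMatrix_mem_Mstar (hf : IsFracPartition k f) (ρ : SGraphon) :
    densityMatrix ρ.toMeasure f ∈ Mstar k := by
  refine ⟨Matrix.ext fun i j => ?_, fun i j => integral_nonneg fun p =>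
    mul_nonneg (hf.nonneg i _) (hf.nonneg j _), ?_⟩
  · change ∫ p, f j p.1 * f i p.2 ∂ρ.toMeasure = ∫ p, f i p.1 * f j p.2 ∂ρ.toMeasure
    rw [← ρ.integral_comp_swap]
    simp only [Prod.fst_swap, Prod.snd_swap, mul_comm]
  · have hint := hf.integrable_mul ρ.toMeasure
    simp only [densityMatrix, Matrix.of_apply]
    simp_rw [← integral_finsetSum Finset.univ fun j _ => hint _ j]
    rw [← integral_finsetSum _ fun i _ => integrable_finsetSum _ fun j _ => hint i j]
    simp only [hf.sum_mul_eq_one, integral_const, probReal_univ, one_smul]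

/-- Coarsening along a fractional partition sends an s-graphon to its density matrix. -/
def coarsen (hf : IsFracPartition k f) (ρ : SGraphon) : Mstar k :=
  ⟨densityMatrix ρ.toMeasure f, hf.densityMatrix_mem_Mstar ρ⟩

theorem measurable_spreadDensity (hf : IsFracPartition k f) (M : Matrix (Fin k) (Fin k) ℝ) :
    Measurable (spreadDensity f M) := by
  have := hf.measurable_mul
  unfold spreadDensity
  fun_prop

theorem spreadDensity_nonneg (hf : IsFracPartition k f) (M : Mstar k) :
    0 ≤ spreadDensity f M.1 := fun _ =>
  mul_nonneg (sq_nonneg _) <| Finset.sum_nonneg fun i _ => Finset.sum_nonneg fun j _ =>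
    mul_nonneg (M.2.2.1 i j) (mul_nonneg (hf.nonneg i _) (hf.nonneg j _))

theorem spreadDensity_le (hf : IsFracPartition k f) (M : Mstar k) (p : Sq) :
    spreadDensity f M.1 p ≤ (k : ℝ) ^ 2 := by
  refine mul_le_of_le_one_right (sq_nonneg _) (M.2.2.2 ▸ ?_)
  exact Finset.sum_le_sum fun i _ => Finset.sum_le_sum fun j _ =>
    mul_le_of_le_one_right (M.2.2.1 i j) ((le_abs_self _).trans (hf.norm_mul_le_one i j p))

theorem integral_mul (hf : IsFracPartition k f) (i j : Fin k) :
    ∫ p : Sq, f i p.1 * f j p.2 = 1 / (k : ℝ) ^ 2 := by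
  rw [Measure.volume_eq_prod, integral_prod_mul, hf.integral_eq, hf.integral_eq]
  ring

theorem integral_spreadDensity (hf : IsFracPartition k f) (M : Mstar k) :
    ∫ p, spreadDensity f M.1 p = 1 := by
  have := hf.neZero
  have hk : (k : ℝ) ≠ 0 := Nat.cast_ne_zero.2 (NeZero.ne k)
  have hint (i j : Fin k) := (hf.integrable_mul volume i j).const_mul (M.1 i j)
  simp only [spreadDensity]
  rw [integral_const_mul,
    integral_finsetSum _ fun i _ => integrable_finsetSum _ fun j _ => hint i j]
  simp_rw [integral_finsetSum Finset.univ fun j _ => hint _ j, integral_const_mul, hf.integral_mul,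
    ← Finset.sum_mul, M.2.2.2]
  field_simp

/-- Spreading along a fractional partition sends a matrix in `M_k^*` to the s-graphon of density
`spreadDensity f M`. -/
def spread (hf : IsFracPartition k f) (M : Mstar k) : SGraphon :=
  .ofDensity (spreadDensity f M.1) (hf.measurable_spreadDensity M.1) (hf.spreadDensity_nonneg M)
    (hf.integral_spreadDensity M) (spreadDensity_swap f M.2.1)

theorem integral_spread (hf : IsFracPartition k f) (M : Mstar k) (F : Sq → ℝ) :
    ∫ p, F p ∂(hf.spread M).toMeasure = ∫ p, spreadDensity f M.1 p * F p :=
  integral_withDensity_ofReal (hf.measurable_spreadDensity M.1) (hf.spreadDensity_nonneg M) F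

section Limits

variable {ι : Type*} {l : Filter ι} [l.IsCountablyGenerated] {h : ι → Fin k → unitInterval → ℝ}

theorem tendsto_coarsen (hh : ∀ n, IsFracPartition k (h n)) (hf : IsFracPartition k f)
    {ρ : SGraphon} (hlim : ∀ᵐ p ∂ρ.toMeasure, ∀ i j,
      Tendsto (fun n => h n i p.1 * h n j p.2) l (𝓝 (f i p.1 * f j p.2))) :
    Tendsto (fun n => (hh n).coarsen ρ) l (𝓝 (hf.coarsen ρ)) := by
  refine tendsto_subtype_rng.2 (tendsto_pi_nhds.2 fun i => tendsto_pi_nhds.2 fun j => ?_)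
  exact tendsto_integral_filter_of_dominated_convergence (fun _ => 1)
    (.of_forall fun n => ((hh n).measurable_mul i j).aestronglyMeasurable)
    (.of_forall fun n => ae_of_all _ ((hh n).norm_mul_le_one i j)) (integrable_const 1)
    (hlim.mono fun p hp => hp i j)

theorem tendsto_integral_spread (hh : ∀ n, IsFracPartition k (h n)) (hf : IsFracPartition k f)
    (hlim : ∀ᵐ p : Sq, ∀ i j,
      Tendsto (fun n => h n i p.1 * h n j p.2) l (𝓝 (f i p.1 * f j p.2)))
    {M : ι → Mstar k} {M₀ : Mstar k} (hM : Tendsto M l (𝓝 M₀)) {G : ι → Sq → ℝ} {G₀ : Sq → ℝ}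
    {C : ℝ} (hGmeas : ∀ n, Measurable (G n)) (hGbound : ∀ n p, ‖G n p‖ ≤ C)
    (hG : ∀ᵐ p : Sq, Tendsto (fun n => G n p) l (𝓝 (G₀ p))) :
    Tendsto (fun n => ∫ p, G n p ∂((hh n).spread (M n)).toMeasure) l
      (𝓝 (∫ p, G₀ p ∂(hf.spread M₀).toMeasure)) := by
  simp only [integral_spread]
  have hentry (i j : Fin k) : Tendsto (fun n => (M n).1 i j) l (𝓝 (M₀.1 i j)) :=
    tendsto_pi_nhds.1 (tendsto_pi_nhds.1 (tendsto_subtype_rng.1 hM) i) j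
  refine tendsto_integral_filter_of_dominated_convergence (fun _ => (k : ℝ) ^ 2 * C)
    (.of_forall fun n => (((hh n).measurable_spreadDensity _).mul (hGmeas n)).aestronglyMeasurable)
    (.of_forall fun n => ae_of_all _ fun p => ?_) (integrable_const _) ?_
  · rw [norm_mul, Real.norm_of_nonneg ((hh n).spreadDensity_nonneg _ p)]
    exact mul_le_mul ((hh n).spreadDensity_le _ p) (hGbound n p) (norm_nonneg _) (sq_nonneg _)
  · filter_upwards [hlim, hG] with p hp hGp
    exact ((tendsto_finsetSum _ fun i _ => tendsto_finsetSum _ fun j _ =>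
      (hentry i j).mul (hp i j)).const_mul _).mul hGp

theorem tendsto_spread (hh : ∀ n, IsFracPartition k (h n)) (hf : IsFracPartition k f)
    (hlim : ∀ᵐ p : Sq, ∀ i j,
      Tendsto (fun n => h n i p.1 * h n j p.2) l (𝓝 (f i p.1 * f j p.2)))
    {M : ι → Mstar k} {M₀ : Mstar k} (hM : Tendsto M l (𝓝 M₀)) :
    Tendsto (fun n => (hh n).spread (M n)) l (𝓝 (hf.spread M₀)) :=
  SGraphon.tendsto_iff_forall_integral_tendsto.2 fun F =>
    tendsto_integral_spread hh hf hlim hM (fun _ => F.continuous.measurable)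
      (fun _ => F.norm_coe_le_norm) (ae_of_all _ fun _ => tendsto_const_nhds)

theorem tendsto_coarsen_spread (hh : ∀ n, IsFracPartition k (h n)) (hf : IsFracPartition k f)
    (hlim : ∀ᵐ p : Sq, ∀ i j,
      Tendsto (fun n => h n i p.1 * h n j p.2) l (𝓝 (f i p.1 * f j p.2))) (M : Mstar k) :
    Tendsto (fun n => (hh n).coarsen ((hh n).spread M)) l (𝓝 (hf.coarsen (hf.spread M))) :=
  tendsto_subtype_rng.2 <| tendsto_pi_nhds.2 fun i => tendsto_pi_nhds.2 fun j =>
    tendsto_integral_spread hh hf hlim tendsto_const_nhds (fun n => (hh n).measurable_mul i j)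
      (fun n => (hh n).norm_mul_le_one i j) (hlim.mono fun _ hp => hp i j)

end Limits

theorem continuous_spread (hf : IsFracPartition k f) : Continuous hf.spread :=
  have : FirstCountableTopology (Matrix (Fin k) (Fin k) ℝ) :=
    inferInstanceAs (FirstCountableTopology (Fin k → Fin k → ℝ))
  continuous_iff_continuousAt.2 fun _ =>
    tendsto_spread (fun _ => hf) hf (ae_of_all _ fun _ _ _ => tendsto_const_nhds) tendsto_id

theorem continuous_coarsen (hf : IsFracPartition k f) (hcont : ∀ i, Continuous (f i)) :
    Continuous hf.coarsen := by
  refine Continuous.subtype_mk (continuous_pi fun i => continuous_pi fun j => ?_) _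
  exact continuous_iff_continuousAt.2 fun ρ =>
    SGraphon.tendsto_iff_forall_integral_tendsto.1 tendsto_id
      ⟨fun p => f i p.1 * f j p.2, by fun_prop⟩

end IsFracPartition

theorem kShape_eq_closure_image (μ : Measure Sq) (k : ℕ) :
    kShape μ k = closure (densityMatrix μ '' {f | IsFracPartition k f}) := by
  refine congrArg closure (Set.ext fun M => exists_congr fun f => and_congr_right fun _ => ?_)
  exact ⟨fun h => Matrix.ext fun i j => (h i j).symm, fun h i j => h ▸ rfl⟩

theorem kShape_subset_Mstar (ρ : SGraphon) (k : ℕ) : kShape ρ.toMeasure k ⊆ Mstar k := by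
  rw [kShape_eq_closure_image]
  exact closure_minimal (Set.image_subset_iff.2 fun _ hf => hf.densityMatrix_mem_Mstar ρ)
    (isClosed_Mstar k)

theorem preimage_kShape_eq_closure_range (ρ : SGraphon) (k : ℕ) :
    (Subtype.val ⁻¹' kShape ρ.toMeasure k : Set (Mstar k)) =
      closure (Set.range fun f : {f // IsFracPartition k f} => f.2.coarsen ρ) := by
  rw [IsInducing.subtypeVal.closure_eq_preimage_closure_image, ← Set.range_comp,
    kShape_eq_closure_image, Set.image_eq_range]
  rfl

theorem isClosed_preimage_kShape (ρ : SGraphon) (k : ℕ) :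
    IsClosed (Subtype.val ⁻¹' kShape ρ.toMeasure k : Set (Mstar k)) :=
  isClosed_closure.preimage continuous_subtype_val

theorem vietorisTendsto_preimage_kShape_iff {μ : SGraphon} {μn : ℕ → SGraphon} {k : ℕ} :
    VietorisTendsto (fun n => (Subtype.val ⁻¹' kShape (μn n).toMeasure k : Set (Mstar k)))
        (Subtype.val ⁻¹' kShape μ.toMeasure k) ↔
      VietorisTendsto (fun n => kShape (μn n).toMeasure k) (kShape μ.toMeasure k) :=
  vietorisTendsto_preimage_iff .subtypeVal
    (fun n => (kShape_subset_Mstar (μn n) k).trans_eq Subtype.range_coe.symm)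
    ((kShape_subset_Mstar μ k).trans_eq Subtype.range_coe.symm)

/-! ### Fairly distributed kernels -/

namespace FairlyDistributed

variable {w : Sq → ℝ}

theorem measurable_mul (hw : FairlyDistributed w) :
    Measurable fun z : Sq × Sq => w (z.1.1, z.2.1) * w (z.1.2, z.2.2) := by
  have := hw.measurable
  fun_prop

theorem measurable_phiFn (hw : FairlyDistributed w) (μ : Measure Sq) [SFinite μ] :
    Measurable (phiFn w μ) :=
  hw.measurable_mul.stronglyMeasurable.integral_prod_left'.measurable

theorem phiFn_nonneg (hw : FairlyDistributed w) (μ : Measure Sq) : 0 ≤ phiFn w μ :=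
  fun _ => integral_nonneg fun _ => mul_nonneg (hw.nonneg _) (hw.nonneg _)

theorem exists_norm_le (hw : FairlyDistributed w) : ∃ C, ∀ p, ‖w p‖ ≤ C :=
  hw.bounded.imp fun _ hC p => (Real.norm_of_nonneg (hw.nonneg p)).trans_le (hC p)

theorem integrable_mul (hw : FairlyDistributed w) (μ : Measure Sq) [IsFiniteMeasure μ]
    {F : Sq → ℝ} (hF : Measurable F) {B : ℝ} (hB : ∀ p, ‖F p‖ ≤ B) :
    Integrable (fun z : Sq × Sq => w (z.1.1, z.2.1) * w (z.1.2, z.2.2) * F z.2)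
      (μ.prod volume) := by
  obtain ⟨C, hC⟩ := hw.exists_norm_le
  have hC0 : 0 ≤ C := (norm_nonneg _).trans (hC 0)
  refine .of_bound (hw.measurable_mul.mul (hF.comp measurable_snd)).aestronglyMeasurable
    (C * C * B) (ae_of_all _ fun z => ?_)
  rw [norm_mul, norm_mul]
  exact mul_le_mul (mul_le_mul (hC _) (hC _) (norm_nonneg _) hC0) (hB _) (norm_nonneg _)
    (mul_nonneg hC0 hC0)

theorem integral_phiMeas (hw : FairlyDistributed w) (μ : Measure Sq) [IsFiniteMeasure μ]
    {F : Sq → ℝ} (hF : Measurable F) {B : ℝ} (hB : ∀ p, ‖F p‖ ≤ B) :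
    ∫ p, F p ∂PhiMeas w μ = ∫ q, (∫ p : Sq, w (q.1, p.1) * w (q.2, p.2) * F p) ∂μ := by
  rw [integral_integral_swap (hw.integrable_mul μ hF hB), PhiMeas,
    integral_withDensity_ofReal (hw.measurable_phiFn μ) (hw.phiFn_nonneg μ)]
  simp only [phiFn, integral_mul_const]

theorem isFracPartition_integral (hw : FairlyDistributed w) {k : ℕ}
    {f : Fin k → unitInterval → ℝ} (hf : IsFracPartition k f) :
    IsFracPartition k fun i x => ∫ v, w (x, v) * f i v := by
  obtain ⟨C, hC⟩ := hw.exists_norm_le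
  have hmeas (i : Fin k) : Measurable fun p : Sq => w p * f i p.2 :=
    hw.measurable.mul ((hf.measurable i).comp measurable_snd)
  have hbound (i : Fin k) (p : Sq) : ‖w p * f i p.2‖ ≤ C * 1 := by
    rw [norm_mul]
    exact mul_le_mul (hC p) (hf.norm_le_one i _) (norm_nonneg _) ((norm_nonneg _).trans (hC p))
  refine ⟨fun i => (hmeas i).stronglyMeasurable.integral_prod_right'.measurable,
    fun i x => integral_nonneg fun v => mul_nonneg (hw.nonneg _) (hf.nonneg i v),
    fun x => ?_, fun i => ?_⟩
  · have hint (i : Fin k) : Integrable fun v => w (x, v) * f i v :=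
      .of_bound ((hmeas i).comp measurable_prodMk_left).aestronglyMeasurable (C * 1)
        (ae_of_all _ fun v => hbound i (x, v))
    change ∑ i, ∫ v, w (x, v) * f i v = 1
    rw [← integral_finsetSum _ fun i _ => hint i]
    simp only [← Finset.mul_sum, hf.sum_eq_one, mul_one, hw.row]
  · rw [integral_integral_swap (.of_bound (hmeas i).aestronglyMeasurable (C * 1)
      (ae_of_all _ (hbound i)))]
    simp only [integral_mul_const, hw.col, one_mul, hf.integral_eq]

theorem densityMatrix_phiMeas (hw : FairlyDistributed w) (μ : Measure Sq) [IsFiniteMeasure μ]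
    {k : ℕ} {f : Fin k → unitInterval → ℝ} (hf : IsFracPartition k f) :
    densityMatrix (PhiMeas w μ) f = densityMatrix μ fun i x => ∫ v, w (x, v) * f i v := by
  refine Matrix.ext fun i j => ?_
  simp only [densityMatrix, Matrix.of_apply]
  rw [hw.integral_phiMeas μ (hf.measurable_mul i j) (hf.norm_mul_le_one i j)]
  simp only [← integral_prod_mul, mul_mul_mul_comm (w _) (w _)]
  rfl

end FairlyDistributed

theorem IsFracPartition.mapsTo_coarsen {k : ℕ} {f : Fin k → unitInterval → ℝ}
    (hf : IsFracPartition k f) (hcont : ∀ i, Continuous (f i)) (μ : SGraphon) :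
    Set.MapsTo hf.coarsen (shape μ) (Subtype.val ⁻¹' kShape μ.toMeasure k) := by
  rw [preimage_kShape_eq_closure_range]
  refine Set.MapsTo.closure ?_ (hf.continuous_coarsen hcont)
  rintro ν ⟨w, hw, -, hν⟩
  refine ⟨⟨_, hw.isFracPartition_integral hf⟩, Subtype.ext ?_⟩
  simp only [coarsen, hν, hw.densityMatrix_phiMeas _ hf]

/-- The kernel `k ∑ c i (x) f i (y)`, whose `Φ`-image of `μ` is obtained by coarsening `μ` along
`c` and spreading the resulting matrix along `f`. -/
def partitionKernel {k : ℕ} (c f : Fin k → unitInterval → ℝ) (p : Sq) : ℝ :=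
  k * ∑ i, c i p.1 * f i p.2

section PartitionKernel

variable {k : ℕ} {c f : Fin k → unitInterval → ℝ}

theorem fairlyDistributed_partitionKernel (hc : IsFracPartition k c) (hf : IsFracPartition k f) :
    FairlyDistributed (partitionKernel c f) := by
  have := hc.neZero
  have hk : (k : ℝ) ≠ 0 := Nat.cast_ne_zero.2 (NeZero.ne k)
  have integrable {g : Fin k → unitInterval → ℝ} (hg : IsFracPartition k g) (i : Fin k) :
      Integrable (g i) :=
    .of_bound (hg.measurable i).aestronglyMeasurable 1 (ae_of_all _ (hg.norm_le_one i))
  refine ⟨?_, fun p => ?_, ⟨k, fun p => ?_⟩, fun x => ?_, fun y => ?_⟩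
  · have := hc.measurable
    have := hf.measurable
    unfold partitionKernel
    fun_prop
  · exact mul_nonneg k.cast_nonneg <| Finset.sum_nonneg fun i _ =>
      mul_nonneg (hc.nonneg i _) (hf.nonneg i _)
  · refine mul_le_of_le_one_right k.cast_nonneg ((Finset.sum_le_sum fun i _ => ?_).trans_eq
      (hc.sum_eq_one p.1))
    exact mul_le_of_le_one_right (hc.nonneg i _) ((le_abs_self _).trans (hf.norm_le_one i _))
  · simp only [partitionKernel]
    rw [integral_const_mul, integral_finsetSum _ fun i _ => (integrable hf i).const_mul _]
    simp only [integral_const_mul, hf.integral_eq, ← Finset.sum_mul, hc.sum_eq_one]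
    field_simp
  · simp only [partitionKernel]
    rw [integral_const_mul, integral_finsetSum _ fun i _ => (integrable hc i).mul_const _]
    simp only [integral_mul_const, hc.integral_eq, ← Finset.mul_sum, hf.sum_eq_one]
    field_simp

theorem phiFn_partitionKernel (hc : IsFracPartition k c) (f : Fin k → unitInterval → ℝ)
    (μ : Measure Sq) [IsFiniteMeasure μ] :
    phiFn (partitionKernel c f) μ = spreadDensity f (densityMatrix μ c) := by
  funext p
  have hint (i j : Fin k) := (hc.integrable_mul μ i j).mul_const (f i p.1 * f j p.2)
  calc phiFn (partitionKernel c f) μ p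
      = ∫ q, (k : ℝ) ^ 2 * ∑ i, ∑ j, c i q.1 * c j q.2 * (f i p.1 * f j p.2) ∂μ := by
        refine integral_congr_ae (ae_of_all _ fun q => ?_)
        simp only [partitionKernel, mul_mul_mul_comm (k : ℝ) _ k, ← sq, Finset.sum_mul_sum,
          mul_mul_mul_comm (c _ _) _ (c _ _)]
    _ = spreadDensity f (densityMatrix μ c) p := by
        rw [integral_const_mul,
          integral_finsetSum _ fun i _ => integrable_finsetSum _ fun j _ => hint i j]
        simp_rw [integral_finsetSum Finset.univ fun j _ => hint _ j, integral_mul_const]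
        rfl

theorem toMeasure_spread_coarsen (hc : IsFracPartition k c) (hf : IsFracPartition k f)
    (ρ : SGraphon) :
    (hf.spread (hc.coarsen ρ)).toMeasure = PhiMeas (partitionKernel c f) ρ.toMeasure := by
  rw [PhiMeas, phiFn_partitionKernel hc]
  rfl

theorem spread_coarsen_mem_shape (c : ContFracPartition k) (hf : IsFracPartition k f)
    (hcont : ∀ i, Continuous (f i)) (μ : SGraphon) : hf.spread (c.2.coarsen μ) ∈ shape μ := by
  refine subset_closure ⟨_, fairlyDistributed_partitionKernel c.2 hf, ?_,
    toMeasure_spread_coarsen c.2 hf μ⟩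
  unfold partitionKernel
  fun_prop

end PartitionKernel

theorem IsFracPartition.mapsTo_spread {k : ℕ} {f : Fin k → unitInterval → ℝ}
    (hf : IsFracPartition k f) (hcont : ∀ i, Continuous (f i)) (μ : SGraphon) :
    Set.MapsTo hf.spread (Subtype.val ⁻¹' kShape μ.toMeasure k) (shape μ) := by
  rw [preimage_kShape_eq_closure_range]
  have hclosed : IsClosed (shape μ) := isClosed_closure
  refine Set.MapsTo.closure_left ?_ hf.continuous_spread hclosed
  rintro _ ⟨⟨c, hc⟩, rfl⟩
  obtain ⟨h, hh⟩ := hc.exists_seq_mul_tendsto_ae μ.toMeasure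
  exact hclosed.mem_of_tendsto
    ((hf.continuous_spread.tendsto _).comp (tendsto_coarsen (fun n => (h n).2) hc hh))
    (.of_forall fun n => spread_coarsen_mem_shape (h n) hf hcont μ)

/-! ### Approximation of the identity -/

theorem FairlyDistributed.norm_integral_phiMeas_sub_le {w : Sq → ℝ} (hw : FairlyDistributed w)
    (μ : Measure Sq) [IsProbabilityMeasure μ] (F : C(Sq, ℝ)) {ε : ℝ}
    (hF : ∀ p q : Sq, w (q.1, p.1) * w (q.2, p.2) ≠ 0 → ‖F p - F q‖ ≤ ε) :
    ‖∫ p, F p ∂PhiMeas w μ - ∫ q, F q ∂μ‖ ≤ ε := by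
  have hFmeas : Measurable F := F.continuous.measurable
  have hmass (q : Sq) : ∫ p : Sq, w (q.1, p.1) * w (q.2, p.2) = 1 := by
    rw [Measure.volume_eq_prod, integral_prod_mul (fun u => w (q.1, u)) (fun u => w (q.2, u)),
      hw.row, hw.row, one_mul]
  have hint := hw.integrable_mul μ hFmeas F.norm_coe_le_norm
  rw [hw.integral_phiMeas μ hFmeas F.norm_coe_le_norm, ← integral_sub hint.integral_prod_left
    (.of_bound F.continuous.aestronglyMeasurable ‖F‖ (ae_of_all _ F.norm_coe_le_norm))]
  refine (norm_integral_le_of_norm_le_const (C := ε) ?_).trans_eq (by simp)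
  filter_upwards [hint.prod_right_ae] with q hq
  have hdensity : Integrable fun p : Sq => w (q.1, p.1) * w (q.2, p.2) :=
    integrable_of_integral_eq_one (hmass q)
  calc ‖(∫ p : Sq, w (q.1, p.1) * w (q.2, p.2) * F p) - F q‖
      = ‖∫ p : Sq, w (q.1, p.1) * w (q.2, p.2) * (F p - F q)‖ := by
        simp only [mul_sub]
        rw [integral_sub hq (hdensity.mul_const _), integral_mul_const, hmass, one_mul]
    _ ≤ ∫ p : Sq, w (q.1, p.1) * w (q.2, p.2) * ε := by
        refine norm_integral_le_of_norm_le (hdensity.mul_const _) (ae_of_all _ fun p => ?_)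
        have hnonneg := mul_nonneg (hw.nonneg (q.1, p.1)) (hw.nonneg (q.2, p.2))
        rw [norm_mul, Real.norm_of_nonneg hnonneg]
        rcases eq_or_ne (w (q.1, p.1) * w (q.2, p.2)) 0 with hzero | hne
        · rw [hzero, zero_mul, zero_mul]
        · exact mul_le_mul_of_nonneg_left (hF p q hne) hnonneg
    _ = ε := by rw [integral_mul_const, hmass, one_mul]

theorem tendsto_integral_phiMeas {w : ℕ → Sq → ℝ} (hw : ∀ n, FairlyDistributed (w n))
    {δ : ℕ → ℝ} (hδ : Tendsto δ atTop (𝓝 0)) (hsupp : ∀ n x y, w n (x, y) ≠ 0 → dist x y ≤ δ n)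
    (μ : Measure Sq) [IsProbabilityMeasure μ] (F : C(Sq, ℝ)) :
    Tendsto (fun n => ∫ p, F p ∂PhiMeas (w n) μ) atTop (𝓝 (∫ p, F p ∂μ)) := by
  rw [Metric.tendsto_nhds]
  intro ε hε
  obtain ⟨r, hr, hFr⟩ := Metric.uniformContinuous_iff.1
    (CompactSpace.uniformContinuous_of_continuous F.continuous) (ε / 2) (half_pos hε)
  filter_upwards [hδ.eventually_lt_const hr] with n hn
  refine ((hw n).norm_integral_phiMeas_sub_le μ F fun p q hpq => ?_).trans_lt (half_lt_self hε)
  have hdist : dist q p ≤ δ n := max_le (hsupp n _ _ (left_ne_zero_of_mul hpq))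
    (hsupp n _ _ (right_ne_zero_of_mul hpq))
  rw [← dist_eq_norm]
  exact (hFr (dist_comm q p ▸ hdist.trans_lt hn)).le

section GridPartition

variable {k : ℕ} (hk : 0 < k)

theorem measurable_gridIdx : Measurable (gridIdx k hk) := by
  have hfloor : Measurable fun x : unitInterval => ⌊(x : ℝ) * k⌋₊ :=
    Nat.measurable_floor.comp (by fun_prop)
  exact (measurable_from_top (f := fun n : ℕ => (⟨min n (k - 1), lt_of_le_of_lt (min_le_right _ _)
    (Nat.sub_lt hk one_pos)⟩ : Fin k))).comp hfloor

theorem coe_mul_mem_Icc_gridIdx (x : unitInterval) :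
    (x : ℝ) * k ∈ Set.Icc ((gridIdx k hk x : ℕ) : ℝ) ((gridIdx k hk x : ℕ) + 1) := by
  have hx0 : 0 ≤ (x : ℝ) * k := mul_nonneg x.2.1 k.cast_nonneg
  have hx1 : (x : ℝ) * k ≤ k := mul_le_of_le_one_left k.cast_nonneg x.2.2
  have hk1 : ((k - 1 : ℕ) : ℝ) + 1 = k := by exact_mod_cast Nat.sub_add_cancel hk
  simp only [gridIdx, Nat.cast_min, Set.mem_Icc, ← min_add_add_right, le_min_iff, hk1]
  exact ⟨(min_le_left _ _).trans (Nat.floor_le hx0), (Nat.lt_floor_add_one _).le, hx1⟩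

theorem gridIdx_preimage_subset_Icc (i : Fin k) :
    gridIdx k hk ⁻¹' {i} ⊆ Subtype.val ⁻¹' Set.Icc ((i : ℕ) / k : ℝ) (((i : ℕ) + 1) / k) := by
  rintro x rfl
  have hk' : (0 : ℝ) < k := Nat.cast_pos.2 hk
  obtain ⟨hlow, hupp⟩ := coe_mul_mem_Icc_gridIdx hk x
  exact ⟨(div_le_iff₀ hk').2 hlow, (le_div_iff₀ hk').2 hupp⟩

theorem dist_le_of_gridIdx_eq {x y : unitInterval} (hxy : gridIdx k hk x = gridIdx k hk y) :
    dist x y ≤ 1 / k := by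
  refine (Real.dist_le_of_mem_Icc (gridIdx_preimage_subset_Icc hk _ hxy)
    (gridIdx_preimage_subset_Icc hk _ rfl)).trans_eq ?_
  ring

/-- The partition of `[0,1]` into the indicator functions of `k` consecutive intervals of
length `1 / k`. -/
def gridPartition (i : Fin k) : unitInterval → ℝ :=
  (gridIdx k hk ⁻¹' {i}).indicator 1

theorem gridPartition_eq_ite (i : Fin k) (x : unitInterval) :
    gridPartition hk i x = if gridIdx k hk x = i then 1 else 0 := by
  simp only [gridPartition, Set.indicator, Set.mem_preimage, Set.mem_singleton_iff, Pi.one_apply]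

theorem measurableSet_gridIdx_preimage (i : Fin k) : MeasurableSet (gridIdx k hk ⁻¹' {i}) :=
  measurable_gridIdx hk (measurableSet_singleton i)

theorem integral_gridPartition_le (i : Fin k) : ∫ x, gridPartition hk i x ≤ 1 / k := by
  rw [gridPartition, integral_indicator_one (measurableSet_gridIdx_preimage hk i)]
  refine ENNReal.toReal_le_of_le_ofReal (by positivity) ?_
  rw [unitInterval.volume_apply]
  refine (measure_mono (Set.image_subset_iff.2 (gridIdx_preimage_subset_Icc hk i))).trans_eq ?_
  rw [Real.volume_Icc]
  ring_nf

theorem isFracPartition_gridPartition : IsFracPartition k (gridPartition hk) := by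
  have hk' : (k : ℝ) ≠ 0 := Nat.cast_ne_zero.2 hk.ne'
  have hcell := measurableSet_gridIdx_preimage hk
  have hsum (x : unitInterval) : ∑ i, gridPartition hk i x = 1 := by
    simp only [gridPartition_eq_ite, Finset.sum_ite_eq, Finset.mem_univ, if_true]
  refine ⟨fun i => measurable_one.indicator (hcell i),
    fun i x => Set.indicator_nonneg (fun _ _ => zero_le_one) x, hsum, fun i => ?_⟩
  refine (Finset.sum_eq_sum_iff_of_le fun i _ => integral_gridPartition_le hk i).1 ?_ i
    (Finset.mem_univ i)
  rw [← integral_finsetSum _ fun i _ => (integrable_const 1).indicator (hcell i)]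
  simp [hsum, hk']

theorem spreadDensity_gridPartition (M : Matrix (Fin k) (Fin k) ℝ) (p : Sq) :
    spreadDensity (gridPartition hk) M p =
      (k : ℝ) ^ 2 * M (gridIdx k hk p.1) (gridIdx k hk p.2) := by
  simp [spreadDensity, gridPartition_eq_ite]

theorem coarsen_spread_gridPartition (M : Mstar k) :
    (isFracPartition_gridPartition hk).coarsen ((isFracPartition_gridPartition hk).spread M) =
      M := by
  have hk' : (k : ℝ) ≠ 0 := Nat.cast_ne_zero.2 hk.ne'
  have hgrid := isFracPartition_gridPartition hk
  refine Subtype.ext (Matrix.ext fun a b => ?_)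
  change ∫ p, gridPartition hk a p.1 * gridPartition hk b p.2 ∂(hgrid.spread M).toMeasure = M.1 a b
  have hcell (p : Sq) : spreadDensity (gridPartition hk) M.1 p *
      (gridPartition hk a p.1 * gridPartition hk b p.2) =
        (k : ℝ) ^ 2 * M.1 a b * (gridPartition hk a p.1 * gridPartition hk b p.2) := by
    simp only [spreadDensity_gridPartition, gridPartition_eq_ite]
    by_cases ha : gridIdx k hk p.1 = a <;> by_cases hb : gridIdx k hk p.2 = b <;> simp [ha, hb]
  rw [hgrid.integral_spread]
  simp only [hcell]
  rw [integral_const_mul, hgrid.integral_mul]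
  field_simp

theorem partitionKernel_gridPartition_eq_zero {x y : unitInterval}
    (hxy : gridIdx k hk x ≠ gridIdx k hk y) :
    partitionKernel (gridPartition hk) (gridPartition hk) (x, y) = 0 := by
  simp [partitionKernel, gridPartition_eq_ite, hxy]

end GridPartition

theorem tendsto_spread_coarsen_gridPartition (ρ : SGraphon) :
    Tendsto (fun n : ℕ => (isFracPartition_gridPartition n.succ_pos).spread
      ((isFracPartition_gridPartition n.succ_pos).coarsen ρ)) atTop (𝓝 ρ) := by
  refine SGraphon.tendsto_iff_forall_integral_tendsto.2 fun F => ?_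
  simp only [toMeasure_spread_coarsen]
  refine tendsto_integral_phiMeas (fun n => fairlyDistributed_partitionKernel
    (isFracPartition_gridPartition _) (isFracPartition_gridPartition _))
    (δ := fun n => 1 / ((n + 1 : ℕ) : ℝ)) ?_ (fun n x y hxy => ?_) _ F
  · exact_mod_cast tendsto_one_div_add_atTop_nhds_zero_nat (𝕜 := ℝ)
  · exact dist_le_of_gridIdx_eq n.succ_pos
      (not_imp_comm.1 (partitionKernel_gridPartition_eq_zero n.succ_pos) hxy)

theorem IsFracPartition.coarsen_spread_mem_closure {k : ℕ} {f : Fin k → unitInterval → ℝ}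
    (hf : IsFracPartition k f) (M : Mstar k) : hf.coarsen (hf.spread M) ∈
      closure (Set.range fun h : ContFracPartition k => h.2.coarsen (h.2.spread M)) := by
  obtain ⟨h, hh⟩ := hf.exists_seq_mul_tendsto_ae volume
  exact mem_closure_of_tendsto (tendsto_coarsen_spread (fun n => (h n).2) hf hh M)
    (.of_forall fun n => ⟨h n, rfl⟩)

theorem IsFracPartition.spread_coarsen_mem_closure {k : ℕ} {f : Fin k → unitInterval → ℝ}
    (hf : IsFracPartition k f) (ρ : SGraphon) : hf.spread (hf.coarsen ρ) ∈
      closure (Set.range fun h : ContFracPartition k => h.2.spread (h.2.coarsen ρ)) := by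
  obtain ⟨h, hh⟩ := hf.exists_seq_mul_tendsto_ae (ρ.toMeasure + volume)
  rw [ae_add_measure_iff] at hh
  exact mem_closure_of_tendsto
    (tendsto_spread (fun n => (h n).2) hf hh.2 (tendsto_coarsen (fun n => (h n).2) hf hh.1))
    (.of_forall fun n => ⟨h n, rfl⟩)

theorem mem_closure_range_coarsen_spread {k : ℕ} (hk : 0 < k) (M : Mstar k) :
    M ∈ closure (Set.range fun h : ContFracPartition k => h.2.coarsen (h.2.spread M)) := by
  simpa only [coarsen_spread_gridPartition] using
    (isFracPartition_gridPartition hk).coarsen_spread_mem_closure M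

theorem mem_closure_range_spread_coarsen (ρ : SGraphon) : ρ ∈ closure (Set.range
    fun i : Σ k, ContFracPartition k => i.2.2.spread (i.2.2.coarsen ρ)) := by
  refine isClosed_closure.mem_of_tendsto (tendsto_spread_coarsen_gridPartition ρ)
    (.of_forall fun n => closure_mono ?_
      ((isFracPartition_gridPartition n.succ_pos).spread_coarsen_mem_closure ρ))
  exact Set.range_subset_iff.2 fun h => ⟨⟨_, h⟩, rfl⟩

/-- Theorem `thm:main`. For s-graphons `μ` and `μₙ`, convergence of all the
`k`-shapes `C(μₙ,k) → C(μ,k)` (in the Vietoris topology on compact subsets of `ℝ^{k×k}`)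
is equivalent to convergence of the shapes `C(μₙ) → C(μ)` (in the Vietoris topology on
compact subsets of the space of s-graphons with the weak topology). -/
theorem stmt0 (μ : SGraphon) (μn : ℕ → SGraphon) :
    (∀ k : ℕ, 0 < k →
      VietorisTendsto (fun n => kShape (μn n).toMeasure k) (kShape μ.toMeasure k)) ↔
    VietorisTendsto (fun n => shape (μn n)) (shape μ) := by
  have cont {k : ℕ} (h : ContFracPartition k) (i : Fin k) : Continuous (h.1 i) :=
    (h.1 i).continuous
  refine ⟨fun H => ?_, fun H k hk => vietorisTendsto_preimage_kShape_iff.1 ?_⟩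
  · exact vietorisTendsto_of_mem_closure (ι := Σ k, ContFracPartition k)
      (fun i => i.2.2.continuous_coarsen (cont i.2)) (fun i => i.2.2.continuous_spread)
      mem_closure_range_spread_coarsen
      (fun i => i.2.2.mapsTo_coarsen (cont i.2)) (fun i => i.2.2.mapsTo_spread (cont i.2))
      isClosed_closure (fun i => isClosed_preimage_kShape μ i.1)
      fun i => vietorisTendsto_preimage_kShape_iff.2 (H i.1 i.2.2.neZero.pos)
  · exact vietorisTendsto_of_mem_closure (ι := ContFracPartition k) (γ := μ) (γn := μn)
      (fun h => h.2.continuous_spread) (fun h => h.2.continuous_coarsen (cont h))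
      (mem_closure_range_coarsen_spread hk)
      (fun h => h.2.mapsTo_spread (cont h)) (fun h => h.2.mapsTo_coarsen (cont h))
      (isClosed_preimage_kShape μ k) (fun _ => isClosed_closure) fun _ => H

end
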